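/- arXiv:2012.11141 — 2 statements merged into one kernel-verified Lean document; each statement's English description precedes it below -/
import Mathlib

section
/- Let a > 0, let φ₁ : ℝ → ℝ be a 1-kink, and let H(r) = 2·arctan(exp(√2·r)). Then the linearization potentials satisfy the strict pointwise inequality −4·sin²(φ₁(r)) + a²/(r²+a²)² > −4·sin²(H(r)) for every r ∈ ℝ. -/
open Real Filter

/-!
Read `r` as time: a kink is a pendulum with friction coefficient `2r / (r² + a²)`, travelling
between the equilibria `0` and `π`. Its energy `φ'² / 2 - sin² φ` increases for `r ≤ 0`, decreases
for `r ≥ 0` and is nonnegative in the limits, hence everywhere, so `φ' ≥ √2 sin φ`; the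
Sine-Gordon kink satisfies this with equality. In terms of `y = log (tan (φ / 2))`, for which
`sin φ = 1 / cosh y`, this says `y' ≥ √2`. Once `φ 0 = π / 2`, i.e. `y 0 = 0`, it follows that
`|y r| ≥ √2 |r|`, that is, `sin φ ≤ sin H`.

If instead `φ 0 > π / 2`, compare `φ` with its reflection `ψ r = π - φ (-r)`, which starts behind
`φ` with the same energy. As long as `ψ` stays behind, `(r² + a²)²` times the energy falls faster
along `ψ` than along `φ`. Thus `ψ` is slower than `φ` wherever it would catch up, so it never
does, and the weighted energy of `ψ` ends up strictly below that of `φ`. The latter tends to `0`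
and the former is nonnegative, a contradiction; the opposite inequality follows by reflection.
-/

theorem exists_first_crossing {X Y : Type*} [ConditionallyCompleteLinearOrder X]
    [TopologicalSpace X] [OrderTopology X] [DenselyOrdered X] [LinearOrder Y] [TopologicalSpace Y]
    [OrderClosedTopology Y] {f g : X → Y} {a b : X} (hf : Continuous f) (hg : Continuous g)
    (hab : a ≤ b) (ha : f a < g a) (hb : g b ≤ f b) :
    ∃ c, a < c ∧ f c = g c ∧ ∀ x, a ≤ x → x < c → f x < g x := by
  have crossing_before : ∀ x, a ≤ x → g x ≤ f x → ∃ c ∈ Set.Icc a x, f c = g c := fun x hax hx =>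
    isPreconnected_Icc.intermediate_value₂ (Set.left_mem_Icc.2 hax) (Set.right_mem_Icc.2 hax)
      hf.continuousOn hg.continuousOn ha.le hx
  have hcompact : IsCompact (Set.Icc a b ∩ {x | f x = g x}) :=
    isCompact_Icc.inter_right (isClosed_eq hf hg)
  obtain ⟨c, ⟨hc, hfg⟩, hleast⟩ := hcompact.exists_isLeast (crossing_before b hab hb)
  refine ⟨c, hc.1.lt_of_ne fun hac => ha.ne (hac ▸ hfg), hfg, fun x hax hxc => ?_⟩
  by_contra! hx
  obtain ⟨d, hd, hfgd⟩ := crossing_before x hax hx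
  exact (hleast ⟨⟨hd.1, hd.2.trans (hxc.le.trans hc.2)⟩, hfgd⟩).not_gt (hd.2.trans_lt hxc)

theorem deriv_le_deriv_of_lt_left {f g : ℝ → ℝ} {b c : ℝ} (hbc : b < c)
    (hf : DifferentiableAt ℝ f c) (hg : DifferentiableAt ℝ g c) (hc : f c = g c)
    (hlt : ∀ x, b ≤ x → x < c → f x < g x) : deriv g c ≤ deriv f c := by
  have hslope : ∀ᶠ x in nhdsWithin c (Set.Iio c), slope g c x ≤ slope f c x := by
    filter_upwards [Ioo_mem_nhdsLT hbc] with x hx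
    rw [slope_def_field, slope_def_field, hc]
    exact div_le_div_of_nonpos_of_le (sub_neg.2 hx.2).le
      (sub_le_sub_right (hlt x hx.1.le hx.2).le _)
  have slope_tendsto {u : ℝ → ℝ} (hu : DifferentiableAt ℝ u c) :
      Tendsto (slope u c) (nhdsWithin c (Set.Iio c)) (nhds (deriv u c)) :=
    (hasDerivAt_iff_tendsto_slope.1 hu.hasDerivAt).mono_left
      (nhdsWithin_mono _ fun _ hx => ne_of_lt hx)
  exact le_of_tendsto_of_tendsto (slope_tendsto hg) (slope_tendsto hf) hslope

theorem eq_const_of_damped_equilibrium {F h f p : ℝ → ℝ} {K C : NNReal} (hF : LipschitzWith K F)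
    (hh : ∀ t, ‖h t‖₊ ≤ C) (hf : ∀ t, HasDerivAt f (p t) t)
    (hp : ∀ t, HasDerivAt p (F (f t) - h t * p t) t) {t₀ : ℝ} (hp₀ : p t₀ = 0)
    (hF₀ : F (f t₀) = 0) (t : ℝ) : f t = f t₀ := by
  let v : ℝ → ℝ × ℝ → ℝ × ℝ := fun t z => (z.2, F z.1 - h t * z.2)
  have hv : ∀ t, LipschitzOnWith (max 1 (K + C)) (v t) Set.univ := fun t =>
    (LipschitzWith.prod_snd.prodMk <| (mul_one K ▸ hF.comp LipschitzWith.prod_fst).sub <|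
      (((lipschitzWith_smul (h t)).comp LipschitzWith.prod_snd).weaken
        (by simpa using hh t))).lipschitzOnWith
  have hequilibrium : ∀ t, HasDerivAt (fun _ => (f t₀, (0 : ℝ))) (v t (f t₀, 0)) t := fun t => by
    simpa [v, hF₀] using (hasDerivAt_const t (f t₀)).prodMk (hasDerivAt_const t (0 : ℝ))
  have hsol : (fun t => (f t, p t)) = fun _ => (f t₀, 0) :=
    ODE_solution_unique_univ (t₀ := t₀) hv (fun t => ⟨(hf t).prodMk (hp t), Set.mem_univ _⟩)
      (fun t => ⟨hequilibrium t, Set.mem_univ _⟩) (by simp only [hp₀])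
  exact congrArg Prod.fst (congrFun hsol t)

theorem sin_eq_two_mul_sin_half_mul_cos_half (θ : ℝ) :
    sin θ = 2 * sin (θ / 2) * cos (θ / 2) := by
  rw [← sin_two_mul, mul_div_cancel₀ _ two_ne_zero]

theorem hasDerivAt_log_tan_half {θ : ℝ} (hθ : sin θ ≠ 0) :
    HasDerivAt (fun x => log (tan (x / 2))) (sin θ)⁻¹ θ := by
  have hsin := sin_eq_two_mul_sin_half_mul_cos_half θ
  obtain ⟨⟨-, hs⟩, hc⟩ : (_ ∧ sin (θ / 2) ≠ 0) ∧ cos (θ / 2) ≠ 0 := by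
    simpa only [hsin, mul_ne_zero_iff] using hθ
  have htan : tan (θ / 2) ≠ 0 := by rw [tan_eq_sin_div_cos]; exact div_ne_zero hs hc
  have hderiv := (HasDerivAt.comp θ (h := fun x => x / 2) (hasDerivAt_tan hc)
    ((hasDerivAt_id θ).div_const 2)).log htan
  refine hderiv.congr_deriv ?_
  simp only [Function.comp_apply]
  rw [hsin, tan_eq_sin_div_cos]
  field_simp

theorem cosh_log_tan_half {θ : ℝ} (hθ : θ ∈ Set.Ioo 0 π) :
    cosh (log (tan (θ / 2))) = (sin θ)⁻¹ := by
  have hs : 0 < sin (θ / 2) :=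
    sin_pos_of_pos_of_lt_pi (by linarith [hθ.1]) (by linarith [hθ.1, hθ.2])
  have hc : 0 < cos (θ / 2) := cos_pos_of_mem_Ioo ⟨by linarith [hθ.1, pi_pos], by linarith [hθ.2]⟩
  rw [cosh_log (tan_eq_sin_div_cos (θ / 2) ▸ div_pos hs hc), tan_eq_sin_div_cos,
    sin_eq_two_mul_sin_half_mul_cos_half θ]
  field_simp
  exact sin_sq_add_cos_sq _

theorem sin_two_mul_arctan_exp (x : ℝ) : sin (2 * arctan (exp x)) = (cosh x)⁻¹ := by
  have hmem : 2 * arctan (exp x) ∈ Set.Ioo 0 π :=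
    ⟨by linarith [arctan_pos.2 (exp_pos x)], by linarith [arctan_lt_pi_div_two (exp x)]⟩
  rw [← inv_inv (sin _), ← cosh_log_tan_half hmem, mul_div_cancel_left₀ _ two_ne_zero, tan_arctan,
    log_exp]

theorem abs_two_mul_div_sq_add_sq_le {a : ℝ} (ha : 0 < a) (r : ℝ) :
    |2 * r / (r ^ 2 + a ^ 2)| ≤ a⁻¹ := by
  have hden : 0 < r ^ 2 + a ^ 2 := by positivity
  rw [abs_div, abs_of_pos hden, div_le_iff₀ hden, inv_mul_eq_div, le_div_iff₀ ha, abs_mul, abs_two]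
  nlinarith [sq_nonneg (|r| - a), sq_abs r]

/-- A 1-kink on the wormhole of throat radius `a`. -/
structure IsWormholeKink (a : ℝ) (φ : ℝ → ℝ) : Prop where
  pos : 0 < a
  contDiff : ContDiff ℝ 2 φ
  equation : ∀ r, deriv (deriv φ) r + 2 * r / (r ^ 2 + a ^ 2) * deriv φ r = sin (2 * φ r)
  tendsto_atBot : Tendsto φ atBot (nhds 0)
  tendsto_atTop : Tendsto φ atTop (nhds π)

/-- The image of a profile under the symmetry `r ↦ -r`, `φ ↦ π - φ`, which permutes the kinks. -/
noncomputable def kinkReflection (φ : ℝ → ℝ) (r : ℝ) : ℝ := π - φ (-r)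

/-- The mechanical energy of `φ`, with `r` as time; it is dissipated for `r > 0`, pumped in for
`r < 0`, and vanishes at the equilibria `0` and `π`. -/
noncomputable def kinkEnergy (φ : ℝ → ℝ) (r : ℝ) : ℝ := deriv φ r ^ 2 / 2 - sin (φ r) ^ 2

/-- The energy times the integrating factor of the friction term: its derivative along a solution
does not involve `deriv φ`. -/
noncomputable def weightedKinkEnergy (a : ℝ) (φ : ℝ → ℝ) (r : ℝ) : ℝ :=
  (r ^ 2 + a ^ 2) ^ 2 * kinkEnergy φ r

theorem kinkReflection_zero (φ : ℝ → ℝ) : kinkReflection φ 0 = π - φ 0 := by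
  rw [kinkReflection, neg_zero]

theorem deriv_kinkReflection (φ : ℝ → ℝ) : deriv (kinkReflection φ) = fun r => deriv φ (-r) := by
  ext r
  change deriv (fun r => π - φ (-r)) r = _
  rw [deriv_const_sub, deriv_comp_neg, neg_neg]

theorem kinkEnergy_kinkReflection (φ : ℝ → ℝ) (r : ℝ) :
    kinkEnergy (kinkReflection φ) r = kinkEnergy φ (-r) := by
  rw [kinkEnergy, kinkEnergy, deriv_kinkReflection, kinkReflection, sin_pi_sub]

namespace IsWormholeKink

variable {a : ℝ} {φ ψ : ℝ → ℝ} {r R : ℝ}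

theorem differentiable (hφ : IsWormholeKink a φ) : Differentiable ℝ φ :=
  hφ.contDiff.differentiable two_ne_zero

theorem differentiable_deriv (hφ : IsWormholeKink a φ) : Differentiable ℝ (deriv φ) :=
  hφ.contDiff.differentiable_deriv_two

theorem hasDerivAt (hφ : IsWormholeKink a φ) (r : ℝ) : HasDerivAt φ (deriv φ r) r :=
  (hφ.differentiable r).hasDerivAt

theorem hasDerivAt_deriv (hφ : IsWormholeKink a φ) (r : ℝ) :
    HasDerivAt (deriv φ) (sin (2 * φ r) - 2 * r / (r ^ 2 + a ^ 2) * deriv φ r) r :=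
  (hφ.differentiable_deriv r).hasDerivAt.congr_deriv (eq_sub_of_add_eq (hφ.equation r))

theorem reflection (hφ : IsWormholeKink a φ) : IsWormholeKink a (kinkReflection φ) where
  pos := hφ.pos
  contDiff := contDiff_const.sub (hφ.contDiff.comp contDiff_neg)
  equation r := by
    have hsin : sin (2 * (π - φ (-r))) = -sin (2 * φ (-r)) := by
      rw [mul_sub, sin_two_pi_sub]
    rw [deriv_kinkReflection, deriv_comp_neg, kinkReflection, hsin, ← hφ.equation (-r)]
    ring
  tendsto_atBot :=
    sub_self π ▸ (hφ.tendsto_atTop.comp tendsto_neg_atBot_atTop).const_sub π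
  tendsto_atTop :=
    sub_zero π ▸ (hφ.tendsto_atBot.comp tendsto_neg_atTop_atBot).const_sub π

theorem hasDerivAt_energy (hφ : IsWormholeKink a φ) (r : ℝ) :
    HasDerivAt (kinkEnergy φ) (-(2 * r / (r ^ 2 + a ^ 2)) * deriv φ r ^ 2) r := by
  refine ((((hφ.hasDerivAt_deriv r).pow 2).div_const 2).sub
    ((hφ.hasDerivAt r).sin.pow 2)).congr_deriv ?_
  rw [sin_two_mul]
  push_cast
  ring

theorem monotoneOn_energy (hφ : IsWormholeKink a φ) : MonotoneOn (kinkEnergy φ) (Set.Iic 0) := by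
  have hdiff : Differentiable ℝ (kinkEnergy φ) := fun r => (hφ.hasDerivAt_energy r).differentiableAt
  refine monotoneOn_of_deriv_nonneg (convex_Iic 0) hdiff.continuous.continuousOn
    hdiff.differentiableOn fun r hr => ?_
  rw [interior_Iic, Set.mem_Iio] at hr
  rw [(hφ.hasDerivAt_energy r).deriv]
  have hfriction : 2 * r / (r ^ 2 + a ^ 2) ≤ 0 :=
    div_nonpos_of_nonpos_of_nonneg (by linarith) (by positivity)
  exact mul_nonneg (neg_nonneg.2 hfriction) (sq_nonneg _)

theorem energy_nonneg_of_nonpos (hφ : IsWormholeKink a φ) (hr : r ≤ 0) : 0 ≤ kinkEnergy φ r := by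
  have hlim : Tendsto (fun s => -sin (φ s) ^ 2) atBot (nhds 0) := by
    simpa using (((continuous_sin.tendsto 0).comp hφ.tendsto_atBot).pow 2).neg
  refine le_of_tendsto hlim ?_
  filter_upwards [eventually_le_atBot r] with s hs
  calc -sin (φ s) ^ 2 ≤ kinkEnergy φ s := by rw [kinkEnergy]; linarith [sq_nonneg (deriv φ s)]
    _ ≤ kinkEnergy φ r := hφ.monotoneOn_energy (hs.trans hr) hr hs

theorem energy_nonneg (hφ : IsWormholeKink a φ) (r : ℝ) : 0 ≤ kinkEnergy φ r := by
  rcases le_total r 0 with hr | hr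
  · exact hφ.energy_nonneg_of_nonpos hr
  · simpa only [kinkEnergy_kinkReflection, neg_neg] using
      hφ.reflection.energy_nonneg_of_nonpos (neg_nonpos.2 hr)

theorem two_mul_sin_sq_le_deriv_sq (hφ : IsWormholeKink a φ) (r : ℝ) :
    2 * sin (φ r) ^ 2 ≤ deriv φ r ^ 2 := by
  have henergy := hφ.energy_nonneg r
  rw [kinkEnergy] at henergy
  linarith

theorem ne_const (hφ : IsWormholeKink a φ) (c : ℝ) : ¬∀ r, φ r = c := fun hc => by
  have hφc : φ = fun _ => c := funext hc
  have hzero : c = 0 := tendsto_nhds_unique tendsto_const_nhds (hφc ▸ hφ.tendsto_atBot)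
  have hpi : c = π := tendsto_nhds_unique tendsto_const_nhds (hφc ▸ hφ.tendsto_atTop)
  exact pi_ne_zero (hpi.symm.trans hzero)

theorem deriv_ne_zero (hφ : IsWormholeKink a φ) (r : ℝ) : deriv φ r ≠ 0 := fun hr => by
  have hsin : sin (φ r) = 0 := by
    have := hφ.two_mul_sin_sq_le_deriv_sq r
    rw [hr] at this
    exact pow_eq_zero_iff two_ne_zero |>.1 (by linarith [sq_nonneg (sin (φ r))])
  have hlip : LipschitzWith 2 fun x : ℝ => sin (2 * x) := by
    simpa [Function.comp_def] using lipschitzWith_sin.comp (lipschitzWith_smul (2 : ℝ))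
  have hfriction (t : ℝ) : ‖2 * t / (t ^ 2 + a ^ 2)‖₊ ≤ (⟨a⁻¹, inv_nonneg.2 hφ.pos.le⟩ : NNReal) :=
    abs_two_mul_div_sq_add_sq_le hφ.pos t
  exact hφ.ne_const _ <| eq_const_of_damped_equilibrium hlip hfriction hφ.hasDerivAt
    hφ.hasDerivAt_deriv hr (by rw [sin_two_mul, hsin, mul_zero, zero_mul])

theorem deriv_pos (hφ : IsWormholeKink a φ) (r : ℝ) : 0 < deriv φ r := by
  rcases hasDerivWithinAt_forall_lt_or_forall_gt_of_forall_ne convex_univ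
    (fun x _ => (hφ.hasDerivAt x).hasDerivWithinAt) (fun x _ => hφ.deriv_ne_zero x) with hneg | hpos
  · have hanti : Antitone φ :=
      antitone_of_deriv_nonpos hφ.differentiable fun x => (hneg x (Set.mem_univ x)).le
    exact absurd ((hanti.le_of_tendsto hφ.tendsto_atTop 0).trans
      (hanti.ge_of_tendsto hφ.tendsto_atBot 0)) pi_pos.not_ge
  · exact hpos r (Set.mem_univ r)

theorem strictMono (hφ : IsWormholeKink a φ) : StrictMono φ :=
  strictMono_of_deriv_pos hφ.deriv_pos

theorem mem_Ioo (hφ : IsWormholeKink a φ) (r : ℝ) : φ r ∈ Set.Ioo 0 π :=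
  ⟨(hφ.strictMono.monotone.le_of_tendsto hφ.tendsto_atBot (r - 1)).trans_lt
      (hφ.strictMono (sub_one_lt r)),
    (hφ.strictMono (lt_add_one r)).trans_le
      (hφ.strictMono.monotone.ge_of_tendsto hφ.tendsto_atTop (r + 1))⟩

theorem sin_pos (hφ : IsWormholeKink a φ) (r : ℝ) : 0 < sin (φ r) :=
  sin_pos_of_mem_Ioo (hφ.mem_Ioo r)

theorem sqrt_two_mul_sin_le_deriv (hφ : IsWormholeKink a φ) (r : ℝ) :
    √2 * sin (φ r) ≤ deriv φ r := by
  refine le_of_sq_le_sq ?_ (hφ.deriv_pos r).le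
  rw [mul_pow, sq_sqrt zero_le_two]
  exact hφ.two_mul_sin_sq_le_deriv_sq r

theorem antitoneOn_deriv (hφ : IsWormholeKink a φ) (h₀ : π / 2 ≤ φ 0) :
    AntitoneOn (deriv φ) (Set.Ici 0) := by
  refine antitoneOn_of_deriv_nonpos (convex_Ici 0) hφ.differentiable_deriv.continuous.continuousOn
    hφ.differentiable_deriv.differentiableOn fun r hr => ?_
  rw [interior_Ici, Set.mem_Ioi] at hr
  have hcos : cos (φ r) ≤ 0 := cos_nonpos_of_pi_div_two_le_of_le
    (h₀.trans (hφ.strictMono hr).le) (by linarith [(hφ.mem_Ioo r).2, pi_pos])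
  have hfriction : 0 ≤ 2 * r / (r ^ 2 + a ^ 2) * deriv φ r :=
    mul_nonneg (by positivity) (hφ.deriv_pos r).le
  have hforce : 2 * sin (φ r) * cos (φ r) ≤ 0 :=
    mul_nonpos_of_nonneg_of_nonpos (mul_pos two_pos (hφ.sin_pos r)).le hcos
  rw [(hφ.hasDerivAt_deriv r).deriv, sin_two_mul]
  linarith

theorem pi_sub_le_two_mul_deriv (hφ : IsWormholeKink a φ) (h₀ : π / 2 ≤ φ 0) (hr : 0 ≤ r) :
    π - φ r ≤ 2 * deriv φ r := by
  have hφr : 0 ≤ π - φ r := sub_nonneg.2 (hφ.mem_Ioo r).2.le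
  have hpi : 1 / 2 ≤ 2 / π := by
    rw [div_le_div_iff₀ two_pos pi_pos]
    linarith [pi_le_four]
  have hsqrt : 1 ≤ √2 := one_le_sqrt.2 one_le_two
  calc π - φ r = 2 * (1 / 2 * (π - φ r)) := by ring
    _ ≤ 2 * (2 / π * (π - φ r)) := by gcongr
    _ ≤ 2 * sin (φ r) := by
      gcongr
      rw [← sin_pi_sub]
      exact mul_le_sin hφr (by linarith [hφ.strictMono.monotone hr])
    _ ≤ 2 * (√2 * sin (φ r)) := by
      gcongr
      exact le_mul_of_one_le_left (hφ.sin_pos r).le hsqrt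
    _ ≤ 2 * deriv φ r := by
      gcongr
      exact hφ.sqrt_two_mul_sin_le_deriv r

theorem half_mul_deriv_le (hφ : IsWormholeKink a φ) (h₀ : π / 2 ≤ φ 0) (hr : 0 ≤ r) :
    r / 2 * deriv φ r ≤ π - φ (r / 2) := by
  have hslope : deriv φ r * (r - r / 2) ≤ φ r - φ (r / 2) := by
    refine (convex_Icc (r / 2) r).mul_sub_le_image_sub_of_le_deriv
      hφ.differentiable.continuous.continuousOn hφ.differentiable.differentiableOn
      (fun x hx => ?_) _ (Set.left_mem_Icc.2 (half_le_self hr)) _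
      (Set.right_mem_Icc.2 (half_le_self hr)) (half_le_self hr)
    have hx := interior_subset hx
    exact hφ.antitoneOn_deriv h₀ ((div_nonneg hr zero_le_two).trans hx.1) hr hx.2
  linarith [(hφ.mem_Ioo r).2]

theorem sq_mul_deriv_le (hφ : IsWormholeKink a φ) (h₀ : π / 2 ≤ φ 0) (hr : 0 ≤ r) :
    r ^ 2 * deriv φ r ≤ 16 * (π - φ (r / 4)) := by
  -- The kink's distance to `π` is controlled by its slope and vice versa; each of the two
  -- applications of `half_mul_deriv_le` gains one power of `r`.
  calc r ^ 2 * deriv φ r = 2 * r * (r / 2 * deriv φ r) := by ring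
    _ ≤ 2 * r * (2 * deriv φ (r / 2)) := by
      gcongr ?_ * ?_
      exact (hφ.half_mul_deriv_le h₀ hr).trans
        (hφ.pi_sub_le_two_mul_deriv h₀ (div_nonneg hr zero_le_two))
    _ = 16 * (r / 2 / 2 * deriv φ (r / 2)) := by ring
    _ ≤ 16 * (π - φ (r / 2 / 2)) := by
      gcongr
      exact hφ.half_mul_deriv_le h₀ (div_nonneg hr zero_le_two)
    _ = 16 * (π - φ (r / 4)) := by rw [div_div]; norm_num

theorem tendsto_sq_add_sq_mul_deriv (hφ : IsWormholeKink a φ) (h₀ : π / 2 ≤ φ 0) :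
    Tendsto (fun r => (r ^ 2 + a ^ 2) * deriv φ r) atTop (nhds 0) := by
  have hlim : Tendsto (fun r => 32 * (π - φ (r / 4))) atTop (nhds 0) := by
    simpa using ((hφ.tendsto_atTop.comp (tendsto_id.atTop_div_const four_pos)).const_sub
      π).const_mul 32
  refine squeeze_zero' (Eventually.of_forall fun r =>
    mul_nonneg (by positivity) (hφ.deriv_pos r).le) ?_ hlim
  filter_upwards [eventually_ge_atTop a] with r hr
  have har : a ^ 2 ≤ r ^ 2 := pow_le_pow_left₀ hφ.pos.le hr 2
  calc (r ^ 2 + a ^ 2) * deriv φ r ≤ (r ^ 2 + r ^ 2) * deriv φ r := by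
        gcongr
        exact (hφ.deriv_pos r).le
    _ ≤ 32 * (π - φ (r / 4)) := by linarith [hφ.sq_mul_deriv_le h₀ (hφ.pos.le.trans hr)]

theorem hasDerivAt_weightedEnergy (hφ : IsWormholeKink a φ) (r : ℝ) :
    HasDerivAt (weightedKinkEnergy a φ) (-(4 * r * (r ^ 2 + a ^ 2)) * sin (φ r) ^ 2) r := by
  have hweight : HasDerivAt (fun r => (r ^ 2 + a ^ 2) ^ 2) (4 * r * (r ^ 2 + a ^ 2)) r := by
    refine ((((hasDerivAt_id r).pow 2).add_const (a ^ 2)).pow 2).congr_deriv ?_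
    simp only [Nat.cast_ofNat, Pi.pow_apply, id, Nat.add_one_sub_one, pow_one, mul_one]
    ring
  refine (hweight.mul (hφ.hasDerivAt_energy r)).congr_deriv ?_
  have hne : r ^ 2 + a ^ 2 ≠ 0 := by have := hφ.pos; positivity
  rw [kinkEnergy]
  field_simp
  ring

theorem weightedEnergy_nonneg (hφ : IsWormholeKink a φ) (r : ℝ) : 0 ≤ weightedKinkEnergy a φ r :=
  mul_nonneg (by positivity) (hφ.energy_nonneg r)

theorem tendsto_weightedEnergy (hφ : IsWormholeKink a φ) (h₀ : π / 2 ≤ φ 0) :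
    Tendsto (weightedKinkEnergy a φ) atTop (nhds 0) := by
  refine squeeze_zero hφ.weightedEnergy_nonneg (fun r => ?_)
    (by simpa using (hφ.tendsto_sq_add_sq_mul_deriv h₀).pow 2)
  rw [weightedKinkEnergy, kinkEnergy, mul_pow]
  gcongr
  linarith [sq_nonneg (deriv φ r), sq_nonneg (sin (φ r))]

theorem sin_lt_sin_of_lt (hφ : IsWormholeKink a φ) (hψ : IsWormholeKink a ψ)
    (h₀ : π - φ 0 ≤ ψ 0) (hr : 0 < r) (hlt : ψ r < φ r) : sin (φ r) < sin (ψ r) := by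
  have hφr := hφ.strictMono hr
  have hψr := hψ.strictMono hr
  have hfar : |ψ r - π / 2| < |φ r - π / 2| := by
    rw [abs_of_pos (show 0 < φ r - π / 2 by linarith), abs_lt]
    constructor <;> linarith
  have hφpi : |φ r - π / 2| ≤ π :=
    abs_le.2 ⟨by linarith [(hφ.mem_Ioo r).1, pi_pos], by linarith [(hφ.mem_Ioo r).2, pi_pos]⟩
  simpa only [cos_abs, cos_sub_pi_div_two] using
    cos_lt_cos_of_nonneg_of_le_pi (abs_nonneg _) hφpi hfar

theorem strictAntiOn_weightedEnergy_sub (hφ : IsWormholeKink a φ) (hψ : IsWormholeKink a ψ)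
    (h₀ : π - φ 0 ≤ ψ 0) (hlt : ∀ r, 0 ≤ r → r < R → ψ r < φ r) :
    StrictAntiOn (weightedKinkEnergy a ψ - weightedKinkEnergy a φ) (Set.Icc 0 R) := by
  have hderiv r := (hψ.hasDerivAt_weightedEnergy r).sub (hφ.hasDerivAt_weightedEnergy r)
  refine strictAntiOn_of_deriv_neg (convex_Icc 0 R)
    (fun r _ => (hderiv r).continuousAt.continuousWithinAt) fun r hr => ?_
  rw [interior_Icc] at hr
  rw [(hderiv r).deriv]
  have hsin : sin (φ r) ^ 2 < sin (ψ r) ^ 2 := pow_lt_pow_left₀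
    (hφ.sin_lt_sin_of_lt hψ h₀ hr.1 (hlt r hr.1.le hr.2)) (hφ.sin_pos r).le two_ne_zero
  have hcoeff : 0 < 4 * r * (r ^ 2 + a ^ 2) := by have := hr.1; positivity
  linarith [mul_lt_mul_of_pos_left hsin hcoeff]

theorem lt_of_apply_zero_lt (hφ : IsWormholeKink a φ) (hψ : IsWormholeKink a ψ)
    (h₀ : π - φ 0 ≤ ψ 0) (hlt : ψ 0 < φ 0) (henergy : kinkEnergy ψ 0 ≤ kinkEnergy φ 0)
    (hr : 0 ≤ r) : ψ r < φ r := by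
  by_contra! hle
  obtain ⟨c, hc, heq, hbefore⟩ := exists_first_crossing hψ.differentiable.continuous
    hφ.differentiable.continuous hr hlt hle
  have hderiv : deriv φ c ≤ deriv ψ c :=
    deriv_le_deriv_of_lt_left hc (hψ.differentiable c) (hφ.differentiable c) heq hbefore
  have hgap : weightedKinkEnergy a ψ c - weightedKinkEnergy a φ c <
      weightedKinkEnergy a ψ 0 - weightedKinkEnergy a φ 0 :=
    hφ.strictAntiOn_weightedEnergy_sub hψ h₀ hbefore (Set.left_mem_Icc.2 hc.le)
      (Set.right_mem_Icc.2 hc.le) hc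
  have hgap_zero : weightedKinkEnergy a ψ 0 ≤ weightedKinkEnergy a φ 0 :=
    mul_le_mul_of_nonneg_left henergy (by positivity)
  have hgap_crossing : weightedKinkEnergy a φ c ≤ weightedKinkEnergy a ψ c := by
    rw [weightedKinkEnergy, weightedKinkEnergy, kinkEnergy, kinkEnergy, heq]
    have := (hφ.deriv_pos c).le
    gcongr
  linarith

theorem apply_zero_le (hφ : IsWormholeKink a φ) : φ 0 ≤ π / 2 := by
  by_contra! hgt
  have hψ := hφ.reflection
  have h₀ : π - φ 0 ≤ kinkReflection φ 0 := (kinkReflection_zero φ).ge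
  have henergy : kinkEnergy (kinkReflection φ) 0 = kinkEnergy φ 0 := by
    rw [kinkEnergy_kinkReflection, neg_zero]
  have hlt (r : ℝ) (hr : 0 ≤ r) : kinkReflection φ r < φ r :=
    hφ.lt_of_apply_zero_lt hψ h₀ (by rw [kinkReflection_zero]; linarith) henergy.le hr
  set gap := weightedKinkEnergy a (kinkReflection φ) - weightedKinkEnergy a φ
  have hanti (R : ℝ) : StrictAntiOn gap (Set.Icc 0 R) :=
    hφ.strictAntiOn_weightedEnergy_sub hψ h₀ fun r hr _ => hlt r hr
  have hgap_zero : gap 0 = 0 := by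
    simp only [gap, Pi.sub_apply, weightedKinkEnergy, henergy, sub_self]
  have hgap_one : gap 1 < 0 := hgap_zero ▸
    hanti 1 (Set.left_mem_Icc.2 zero_le_one) (Set.right_mem_Icc.2 zero_le_one) one_pos
  have hgap_one_nonneg : 0 ≤ gap 1 := by
    refine le_of_tendsto (by simpa using (hφ.tendsto_weightedEnergy hgt.le).neg) ?_
    filter_upwards [eventually_ge_atTop 1] with r hr
    calc -weightedKinkEnergy a φ r ≤ gap r := by
          simp only [gap, Pi.sub_apply]; linarith [hψ.weightedEnergy_nonneg r]
      _ ≤ gap 1 := (hanti r).antitoneOn ⟨zero_le_one, hr⟩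
          (Set.right_mem_Icc.2 (zero_le_one.trans hr)) hr
  exact hgap_one.not_ge hgap_one_nonneg

theorem apply_zero (hφ : IsWormholeKink a φ) : φ 0 = π / 2 := by
  have hle := hφ.reflection.apply_zero_le
  rw [kinkReflection_zero] at hle
  linarith [hφ.apply_zero_le]

theorem monotone_log_tan_half_sub (hφ : IsWormholeKink a φ) :
    Monotone fun r => log (tan (φ r / 2)) - √2 * r := by
  refine monotone_of_hasDerivAt_nonneg
    (f' := fun r => (sin (φ r))⁻¹ * deriv φ r - √2) (fun r => ?_) fun r => ?_
  · exact ((hasDerivAt_log_tan_half (hφ.sin_pos r).ne').comp r (hφ.hasDerivAt r)).sub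
      (hasDerivAt_const_mul √2)
  · rw [Pi.zero_apply, sub_nonneg, inv_mul_eq_div, le_div_iff₀ (hφ.sin_pos r)]
    exact hφ.sqrt_two_mul_sin_le_deriv r

theorem abs_sqrt_two_mul_le (hφ : IsWormholeKink a φ) (r : ℝ) :
    |√2 * r| ≤ |log (tan (φ r / 2))| := by
  have hzero : log (tan (φ 0 / 2)) = 0 := by
    rw [hφ.apply_zero, div_div, show (2 : ℝ) * 2 = 4 by norm_num, tan_pi_div_four, log_one]
  rcases le_total 0 r with hr | hr
  · have hmono := hφ.monotone_log_tan_half_sub hr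
    simp only [hzero, mul_zero, sub_zero, sub_nonneg] at hmono
    exact abs_le_abs_of_nonneg (by positivity) hmono
  · have hmono := hφ.monotone_log_tan_half_sub hr
    simp only [hzero, mul_zero, sub_zero, sub_nonpos] at hmono
    exact abs_le_abs_of_nonpos (mul_nonpos_of_nonneg_of_nonpos (sqrt_nonneg 2) hr) hmono

theorem sin_le_sin_two_mul_arctan_exp (hφ : IsWormholeKink a φ) (r : ℝ) :
    sin (φ r) ≤ sin (2 * arctan (exp (√2 * r))) := by
  rw [sin_two_mul_arctan_exp, ← inv_inv (sin (φ r)), ← cosh_log_tan_half (hφ.mem_Ioo r)]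
  gcongr
  exact cosh_le_cosh.2 (hφ.abs_sqrt_two_mul_le r)

end IsWormholeKink

/-- Pointwise comparison of the linearization potentials:
`−4·sin²(φ₁(r)) + a²/(r²+a²)² > −4·sin²(H(r))` for every `r`. -/
theorem potential_comparison (a : ℝ) (ha : 0 < a) (φ₁ H : ℝ → ℝ)
    (hH : ∀ r, H r = 2 * Real.arctan (Real.exp (Real.sqrt 2 * r)))
    (hφ : ContDiff ℝ 2 φ₁)
    (hφeq : ∀ r : ℝ, deriv (deriv φ₁) r + (2 * r / (r ^ 2 + a ^ 2)) * deriv φ₁ r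
        = Real.sin (2 * φ₁ r))
    (hbot : Tendsto φ₁ atBot (nhds 0))
    (htop : Tendsto φ₁ atTop (nhds Real.pi)) :
    ∀ r : ℝ, -4 * Real.sin (H r) ^ 2
      < -4 * Real.sin (φ₁ r) ^ 2 + a ^ 2 / (r ^ 2 + a ^ 2) ^ 2 := by
  have hkink : IsWormholeKink a φ₁ := ⟨ha, hφ, hφeq, hbot, htop⟩
  intro r
  have hsin : sin (φ₁ r) ≤ sin (H r) := hH r ▸ hkink.sin_le_sin_two_mul_arctan_exp r
  have hsq : sin (φ₁ r) ^ 2 ≤ sin (H r) ^ 2 := pow_le_pow_left₀ (hkink.sin_pos r).le hsin 2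
  have hcurvature : 0 < a ^ 2 / (r ^ 2 + a ^ 2) ^ 2 := by positivity
  linarith
end

section
/- Let H(r) = 2·arctan(exp(√2·r)) and let ψ : ℝ → ℝ be any C² solution of ψ''(r) − 2·cos(2·H(r))·ψ(r) = −2·r·H'(r) such that ψ(r) → 0 and ψ'(r) → 0 as r → ±∞. Then 4·∫_{−∞}^{∞} sin(2·H(r))·ψ(r)·H'(r)² dr = −∫_{−∞}^{∞} H'(r)² dr = −2·√2. Consequently, with the normalized zero mode v₀ = 2^{-3/4}·H', the first-order eigenvalue coefficient c = 1 − 4·∫_{−∞}^{∞} sin(2·H(r))·ψ(r)·v₀(r)² dr equals 2. -/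
open Real Filter

/-!
Write the field equation as `H'' = F(H)` and the linearized operator as `L = ∂² - F'(H)`.
Differentiating the field equation twice gives `L H'' = F''(H) H'²`. Since `L` is symmetric and
`L ψ = -2 r H'`, integration by parts yields
`∫ F''(H) ψ H'² = ∫ H'' L ψ = -∫ r (H'²)' = ∫ H'²`.
For Sine-Gordon `F(x) = sin 2x`, so `F'' = -4 sin 2x`, and the Bogomolny equation `H' = √2 sin H`
evaluates the right-hand side as `[-√2 cos H] = 2√2`. The boundary terms vanish as soon as `ψ` is
bounded: the equation then bounds `ψ''`, hence `ψ'`, while `H'` and `H''` decay.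
-/

open MeasureTheory Set Topology

section Boundedness

lemma exists_norm_le_of_tendsto_cocompact_zero {X E : Type*} [TopologicalSpace X]
    [SeminormedAddCommGroup E] {f : X → E} (hf : Continuous f)
    (hlim : Tendsto f (cocompact X) (𝓝 0)) : ∃ K, ∀ x, ‖f x‖ ≤ K := by
  let g : ZeroAtInftyContinuousMap X E := ⟨⟨f, hf⟩, hlim⟩
  obtain ⟨K, hK⟩ := g.isBounded_range.exists_norm_le
  exact ⟨K, fun x => hK _ (mem_range_self x)⟩

lemma norm_deriv_le_of_norm_le_of_norm_deriv2_le {E : Type*} [NormedAddCommGroup E]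
    [NormedSpace ℝ E] {f f' f'' : ℝ → E} {A B : ℝ} (hf : ∀ x, HasDerivAt f (f' x) x)
    (hf' : ∀ x, HasDerivAt f' (f'' x) x) (hA : ∀ x, ‖f x‖ ≤ A) (hB : ∀ x, ‖f'' x‖ ≤ B) (x : ℝ) :
    ‖f' x‖ ≤ 2 * A + B := by
  have hB0 : 0 ≤ B := (norm_nonneg _).trans (hB x)
  have hosc : ∀ y ∈ Ico x (x + 1), ‖f' y - f' x‖ ≤ B := fun y hy =>
    calc ‖f' y - f' x‖ ≤ B * (y - x) :=
          norm_image_sub_le_of_norm_deriv_le_segment' (fun z _ => (hf' z).hasDerivWithinAt)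
            (fun z _ => hB z) y (right_mem_Icc.2 hy.1)
      _ ≤ B := mul_le_of_le_one_right hB0 (by linarith [hy.2])
  have htaylor : ‖(f (x + 1) - (x + 1) • f' x) - (f x - x • f' x)‖ ≤ B * (x + 1 - x) :=
    norm_image_sub_le_of_norm_deriv_le_segment' (f := fun y => f y - y • f' x)
      (fun y _ => by
        simpa using! ((hf y).sub ((hasDerivAt_id y).smul_const (f' x))).hasDerivWithinAt)
      hosc (x + 1) (right_mem_Icc.2 (by linarith))
  calc ‖f' x‖ = ‖f (x + 1) - f x - ((f (x + 1) - (x + 1) • f' x) - (f x - x • f' x))‖ := by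
        congr 1; module
    _ ≤ ‖f (x + 1)‖ + ‖f x‖ + ‖(f (x + 1) - (x + 1) • f' x) - (f x - x • f' x)‖ :=
        (norm_sub_le _ _).trans (by gcongr; exact norm_sub_le _ _)
    _ ≤ 2 * A + B := by linarith [hA (x + 1), hA x]

end Boundedness

section Virial

variable {F F' F'' H H' ψ ψ' : ℝ → ℝ}

/-- The Wronskian of a fluctuation `ψ` and `H'' = F(H)`, corrected by the virial term `r H'²`;
the derivatives `F'`, `H'` and `ψ'` are passed as separate functions. -/
def virialCurrent (F F' H H' ψ ψ' : ℝ → ℝ) (r : ℝ) : ℝ :=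
  ψ r * (F' (H r) * H' r) - ψ' r * F (H r) - r * H' r ^ 2

lemma hasDerivAt_virialCurrent (hF : ∀ x, HasDerivAt F (F' x) x)
    (hF' : ∀ x, HasDerivAt F' (F'' x) x) (hH : ∀ r, HasDerivAt H (H' r) r)
    (hH' : ∀ r, HasDerivAt H' (F (H r)) r) (hψ : ∀ r, HasDerivAt ψ (ψ' r) r)
    (hψ' : ∀ r, HasDerivAt ψ' (F' (H r) * ψ r - 2 * r * H' r) r) (r : ℝ) :
    HasDerivAt (virialCurrent F F' H H' ψ ψ') (F'' (H r) * ψ r * H' r ^ 2 - H' r ^ 2) r := by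
  have hFH : HasDerivAt (fun r => F (H r)) (F' (H r) * H' r) r := (hF _).comp r (hH r)
  have hF'H : HasDerivAt (fun r => F' (H r)) (F'' (H r) * H' r) r := (hF' _).comp r (hH r)
  refine ((((hψ r).mul (hF'H.mul (hH' r))).sub ((hψ' r).mul hFH)).sub
    ((hasDerivAt_id r).mul ((hH' r).pow 2))).congr_deriv ?_
  simp
  ring

lemma tendsto_virialCurrent_zero {l : Filter ℝ} {A B C D : ℝ} (hψ : ∀ r, |ψ r| ≤ A)
    (hψ' : ∀ r, |ψ' r| ≤ B) (hF' : ∀ x, |F' x| ≤ C) (hrH' : ∀ r, |r * H' r| ≤ D)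
    (hF : Tendsto (fun r => F (H r)) l (𝓝 0)) (hH' : Tendsto H' l (𝓝 0)) :
    Tendsto (virialCurrent F F' H H' ψ ψ') l (𝓝 0) := by
  have hF'H' : Tendsto (fun r => F' (H r) * H' r) l (𝓝 0) :=
    bdd_le_mul_tendsto_zero' C (.of_forall fun r => hF' (H r)) hH'
  have hsq : Tendsto (fun r => r * H' r ^ 2) l (𝓝 0) :=
    (bdd_le_mul_tendsto_zero' D (.of_forall hrH') hH').congr fun r => by ring
  simpa [virialCurrent] using! ((bdd_le_mul_tendsto_zero' A (.of_forall hψ) hF'H').sub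
    (bdd_le_mul_tendsto_zero' B (.of_forall hψ') hF)).sub hsq

theorem integral_deriv2_mul_mul_sq_eq_integral_sq (hF : ∀ x, HasDerivAt F (F' x) x)
    (hF' : ∀ x, HasDerivAt F' (F'' x) x) (hH : ∀ r, HasDerivAt H (H' r) r)
    (hH' : ∀ r, HasDerivAt H' (F (H r)) r) (hψ : ∀ r, HasDerivAt ψ (ψ' r) r)
    (hψ' : ∀ r, HasDerivAt ψ' (F' (H r) * ψ r - 2 * r * H' r) r)
    (hint : Integrable fun r => F'' (H r) * ψ r * H' r ^ 2)
    (hint_sq : Integrable fun r => H' r ^ 2)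
    (hbot : Tendsto (virialCurrent F F' H H' ψ ψ') atBot (𝓝 0))
    (htop : Tendsto (virialCurrent F F' H H' ψ ψ') atTop (𝓝 0)) :
    ∫ r, F'' (H r) * ψ r * H' r ^ 2 = ∫ r, H' r ^ 2 := by
  have hzero := integral_of_hasDerivAt_of_tendsto
    (hasDerivAt_virialCurrent hF hF' hH hH' hψ hψ') (hint.sub hint_sq) hbot htop
  rw [integral_sub hint hint_sq] at hzero
  linarith

end Virial

section Kink

/-- The Sine-Gordon kink, which solves `H'' = sin (2 H)` and interpolates between the vacua
`0` and `π`. -/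
noncomputable def kink (r : ℝ) : ℝ := 2 * arctan (exp (√2 * r))

lemma sin_two_mul_arctan (x : ℝ) : sin (2 * arctan x) = 2 * x / (1 + x ^ 2) := by
  rw [sin_two_mul, ← tan_mul_cos (cos_arctan_pos x).ne', tan_arctan]
  linear_combination 2 * x * cos_sq_arctan x

lemma sin_kink (r : ℝ) : sin (kink r) = (cosh (√2 * r))⁻¹ := by
  rw [kink, sin_two_mul_arctan, cosh_eq, exp_neg]
  have := exp_pos (√2 * r)
  field_simp
  ring

lemma hasDerivAt_kink (r : ℝ) : HasDerivAt kink (√2 * sin (kink r)) r := by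
  have hlin : HasDerivAt (fun r => √2 * r) √2 r := by
    simpa using (hasDerivAt_id r).const_mul √2
  refine (hlin.exp.arctan.const_mul 2).congr_deriv ?_
  rw [kink, sin_two_mul_arctan]
  ring

lemma deriv_kink (r : ℝ) : deriv kink r = √2 * sin (kink r) :=
  (hasDerivAt_kink r).deriv

lemma continuous_kink : Continuous kink :=
  continuous_iff_continuousAt.2 fun r => (hasDerivAt_kink r).continuousAt

lemma hasDerivAt_deriv_kink (r : ℝ) : HasDerivAt (deriv kink) (sin (2 * kink r)) r := by
  rw [funext deriv_kink]
  refine ((hasDerivAt_kink r).sin.const_mul √2).congr_deriv ?_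
  rw [sin_two_mul]
  linear_combination sin (kink r) * cos (kink r) * sq_sqrt (zero_le_two (α := ℝ))

lemma continuous_deriv_kink : Continuous (deriv kink) :=
  continuous_iff_continuousAt.2 fun r => (hasDerivAt_deriv_kink r).continuousAt

lemma tendsto_kink_atTop : Tendsto kink atTop (𝓝 π) := by
  have harg : Tendsto (fun r => exp (√2 * r)) atTop atTop :=
    tendsto_exp_atTop.comp (tendsto_id.const_mul_atTop (by positivity))
  have := ((tendsto_nhds_of_tendsto_nhdsWithin tendsto_arctan_atTop).comp harg).const_mul 2
  rwa [mul_div_cancel₀ π two_ne_zero] at this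

lemma tendsto_kink_atBot : Tendsto kink atBot (𝓝 0) := by
  have harg : Tendsto (fun r => exp (√2 * r)) atBot (𝓝 0) :=
    tendsto_exp_atBot.comp (tendsto_id.const_mul_atBot (by positivity))
  simpa [Function.comp_def] using! ((continuous_arctan.tendsto 0).comp harg).const_mul 2

lemma abs_le_cosh (x : ℝ) : |x| ≤ cosh x :=
  calc |x| ≤ sinh |x| := self_le_sinh_iff.2 (abs_nonneg x)
    _ ≤ cosh |x| := (sinh_lt_cosh _).le
    _ = cosh x := cosh_abs x

lemma abs_mul_deriv_kink_le_one (r : ℝ) : |r * deriv kink r| ≤ 1 := by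
  have hcosh := cosh_pos (√2 * r)
  calc |r * deriv kink r| = |√2 * r| / cosh (√2 * r) := by
        rw [deriv_kink, sin_kink, ← mul_assoc, abs_mul, abs_inv, abs_of_pos hcosh, mul_comm r,
          div_eq_mul_inv]
    _ ≤ 1 := (div_le_one hcosh).2 (abs_le_cosh _)

lemma sq_deriv_kink_le (r : ℝ) : deriv kink r ^ 2 ≤ 3 * (1 + r ^ 2)⁻¹ := by
  have hsq : deriv kink r ^ 2 ≤ 2 := by
    rw [deriv_kink, mul_pow, sq_sqrt zero_le_two]
    linarith [sin_sq_le_one (kink r)]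
  have hrsq : (r * deriv kink r) ^ 2 ≤ 1 := (sq_le_one_iff_abs_le_one _).2
    (abs_mul_deriv_kink_le_one r)
  rw [← div_eq_mul_inv, le_div_iff₀ (by positivity)]
  linarith

lemma integrable_sq_deriv_kink : Integrable fun r => deriv kink r ^ 2 :=
  (integrable_inv_one_add_sq.const_mul 3).mono' (continuous_deriv_kink.pow 2).aestronglyMeasurable
    (.of_forall fun r => by simpa using sq_deriv_kink_le r)

lemma integral_sq_deriv_kink : ∫ r, deriv kink r ^ 2 = 2 * √2 := by
  have hprim (r : ℝ) : HasDerivAt (fun r => -√2 * cos (kink r)) (deriv kink r ^ 2) r := by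
    refine ((hasDerivAt_kink r).cos.const_mul (-√2)).congr_deriv ?_
    rw [deriv_kink]
    ring
  have hlim {l : Filter ℝ} {v : ℝ} (hv : Tendsto kink l (𝓝 v)) :
      Tendsto (fun r => -√2 * cos (kink r)) l (𝓝 (-√2 * cos v)) :=
    ((continuous_cos.tendsto v).comp hv).const_mul _
  rw [integral_of_hasDerivAt_of_tendsto hprim integrable_sq_deriv_kink (hlim tendsto_kink_atBot)
    (hlim tendsto_kink_atTop), cos_pi, cos_zero]
  ring

end Kink

section Fluctuation

variable {ψ ψ' : ℝ → ℝ} {K : ℝ}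

lemma abs_deriv_fluctuation_le (hψ : ∀ r, HasDerivAt ψ (ψ' r) r)
    (hψ' : ∀ r, HasDerivAt ψ' (2 * cos (2 * kink r) * ψ r - 2 * r * deriv kink r) r)
    (hK : ∀ r, |ψ r| ≤ K) (r : ℝ) : |ψ' r| ≤ 2 * K + (2 * K + 2) := by
  refine norm_deriv_le_of_norm_le_of_norm_deriv2_le hψ hψ' hK (fun r => ?_) r
  have hcos : |cos (2 * kink r) * ψ r| ≤ K := by
    rw [abs_mul]
    exact (mul_le_of_le_one_left (abs_nonneg _) (abs_cos_le_one _)).trans (hK r)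
  calc ‖2 * cos (2 * kink r) * ψ r - 2 * r * deriv kink r‖
      = |2 * (cos (2 * kink r) * ψ r) - 2 * (r * deriv kink r)| := by
        rw [norm_eq_abs]; ring_nf
    _ ≤ 2 * |cos (2 * kink r) * ψ r| + 2 * |r * deriv kink r| := by
        simpa [abs_mul] using abs_sub (2 * (cos (2 * kink r) * ψ r)) (2 * (r * deriv kink r))
    _ ≤ 2 * K + 2 := by linarith [abs_mul_deriv_kink_le_one r]

lemma integrable_sin_mul_mul_sq_deriv_kink (hψ : Continuous ψ) (hK : ∀ r, |ψ r| ≤ K) :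
    Integrable fun r => sin (2 * kink r) * ψ r * deriv kink r ^ 2 := by
  refine integrable_sq_deriv_kink.bdd_mul (c := K)
    ((continuous_sin.comp (continuous_kink.const_mul 2)).mul hψ).aestronglyMeasurable
    (.of_forall fun r => ?_)
  rw [norm_mul]
  exact (mul_le_of_le_one_left (norm_nonneg _) (abs_sin_le_one _)).trans (hK r)

lemma tendsto_virialCurrent_kink_zero {l : Filter ℝ} {v : ℝ} (hψ : ∀ r, HasDerivAt ψ (ψ' r) r)
    (hψ' : ∀ r, HasDerivAt ψ' (2 * cos (2 * kink r) * ψ r - 2 * r * deriv kink r) r)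
    (hK : ∀ r, |ψ r| ≤ K) (hv : Tendsto kink l (𝓝 v)) (hsin : sin v = 0) :
    Tendsto (virialCurrent (fun x => sin (2 * x)) (fun x => 2 * cos (2 * x)) kink (deriv kink)
      ψ ψ') l (𝓝 0) := by
  have hcos (x : ℝ) : |2 * cos (2 * x)| ≤ 2 := by
    simpa [abs_mul] using abs_cos_le_one (2 * x)
  have hforce : Tendsto (fun r => sin (2 * kink r)) l (𝓝 0) := by
    rw [← show sin (2 * v) = 0 by rw [sin_two_mul, hsin, mul_zero, zero_mul]]
    exact (continuous_sin.tendsto _).comp (hv.const_mul 2)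
  have hderiv : Tendsto (deriv kink) l (𝓝 0) := by
    simpa [funext deriv_kink, hsin] using ((continuous_sin.tendsto v).comp hv).const_mul √2
  exact tendsto_virialCurrent_zero hK (abs_deriv_fluctuation_le hψ hψ' hK) hcos
    abs_mul_deriv_kink_le_one hforce hderiv

theorem four_mul_integral_sin_mul_mul_sq_deriv_kink (hψ : ∀ r, HasDerivAt ψ (ψ' r) r)
    (hψ' : ∀ r, HasDerivAt ψ' (2 * cos (2 * kink r) * ψ r - 2 * r * deriv kink r) r)
    (hK : ∀ r, |ψ r| ≤ K) :
    4 * ∫ r, sin (2 * kink r) * ψ r * deriv kink r ^ 2 = -∫ r, deriv kink r ^ 2 := by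
  have hlin (x : ℝ) : HasDerivAt (fun x => 2 * x) 2 x := by
    simpa using (hasDerivAt_id x).const_mul 2
  have hF (x : ℝ) : HasDerivAt (fun x => sin (2 * x)) (2 * cos (2 * x)) x :=
    (hlin x).sin.congr_deriv (by ring)
  have hF' (x : ℝ) : HasDerivAt (fun x => 2 * cos (2 * x)) (-4 * sin (2 * x)) x :=
    ((hlin x).cos.const_mul 2).congr_deriv (by ring)
  have hint : Integrable fun r => -4 * sin (2 * kink r) * ψ r * deriv kink r ^ 2 := by
    have hψc : Continuous ψ := continuous_iff_continuousAt.2 fun r => (hψ r).continuousAt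
    simpa only [mul_assoc] using (integrable_sin_mul_mul_sq_deriv_kink hψc hK).const_mul (-4)
  have hvirial := integral_deriv2_mul_mul_sq_eq_integral_sq hF hF'
    (fun r => (hasDerivAt_kink r).differentiableAt.hasDerivAt) hasDerivAt_deriv_kink hψ hψ'
    hint integrable_sq_deriv_kink
    (tendsto_virialCurrent_kink_zero hψ hψ' hK tendsto_kink_atBot sin_zero)
    (tendsto_virialCurrent_kink_zero hψ hψ' hK tendsto_kink_atTop sin_pi)
  simp only [mul_assoc, integral_const_mul] at hvirial ⊢
  linarith

end Fluctuation

lemma two_rpow_neg_three_fourths_sq : ((2 : ℝ) ^ (-(3 : ℝ) / 4)) ^ 2 = (2 * √2)⁻¹ := by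
  rw [← rpow_mul_natCast zero_le_two, sqrt_eq_rpow, ← rpow_one_add' zero_le_two (by norm_num),
    ← rpow_neg zero_le_two]
  norm_num

theorem eigenvalue_coefficient_general {ψ : ℝ → ℝ} {K : ℝ} (hψ : Differentiable ℝ ψ)
    (hψ' : Differentiable ℝ (deriv ψ))
    (hψeq : ∀ r, deriv (deriv ψ) r - 2 * cos (2 * kink r) * ψ r = -2 * r * deriv kink r)
    (hK : ∀ r, |ψ r| ≤ K) :
    (4 * ∫ r, sin (2 * kink r) * ψ r * deriv kink r ^ 2 = -∫ r, deriv kink r ^ 2) ∧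
    (∫ r, deriv kink r ^ 2 = 2 * √2) ∧
    (1 - 4 * ∫ r, sin (2 * kink r) * ψ r * ((2 : ℝ) ^ (-(3 : ℝ) / 4) * deriv kink r) ^ 2 = 2) := by
  have hvirial := four_mul_integral_sin_mul_mul_sq_deriv_kink (fun r => (hψ r).hasDerivAt)
    (fun r => (hψ' r).hasDerivAt.congr_deriv (by linear_combination hψeq r)) hK
  refine ⟨hvirial, integral_sq_deriv_kink, ?_⟩
  rw [integral_sq_deriv_kink] at hvirial
  simp only [mul_pow, two_rpow_neg_three_fourths_sq, mul_left_comm _ (2 * √2)⁻¹,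
    integral_const_mul, hvirial]
  field_simp
  norm_num

/-- For any decaying `C²` solution `ψ` of `ψ'' − 2·cos(2H)·ψ = −2·r·H'`, one has
`4·∫ sin(2H)·ψ·(H')² = −∫ (H')² = −2√2`, and hence the first-order eigenvalue coefficient
`c = 1 − 4·∫ sin(2H)·ψ·v₀²` (with `v₀ = 2^{−3/4}·H'`) equals `2`. -/
theorem eigenvalue_coefficient (H ψ : ℝ → ℝ)
    (hH : ∀ r, H r = 2 * Real.arctan (Real.exp (Real.sqrt 2 * r)))
    (hψ : ContDiff ℝ 2 ψ)
    (hψeq : ∀ r : ℝ, deriv (deriv ψ) r - 2 * Real.cos (2 * H r) * ψ r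
        = -2 * r * deriv H r)
    (hψtop : Tendsto ψ atTop (nhds 0)) (hψbot : Tendsto ψ atBot (nhds 0))
    (hψ'top : Tendsto (deriv ψ) atTop (nhds 0))
    (hψ'bot : Tendsto (deriv ψ) atBot (nhds 0)) :
    (4 * ∫ r : ℝ, Real.sin (2 * H r) * ψ r * (deriv H r) ^ 2
        = -∫ r : ℝ, (deriv H r) ^ 2) ∧
    ((∫ r : ℝ, (deriv H r) ^ 2) = 2 * Real.sqrt 2) ∧
    (1 - 4 * ∫ r : ℝ, Real.sin (2 * H r) * ψ r * ((2 : ℝ) ^ (-(3 : ℝ)/4) * deriv H r) ^ 2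
        = 2) := by
  obtain rfl : H = kink := funext hH
  obtain ⟨K, hK⟩ := exists_norm_le_of_tendsto_cocompact_zero hψ.continuous
    (cocompact_eq_atBot_atTop (α := ℝ) ▸ hψbot.sup hψtop)
  exact eigenvalue_coefficient_general (hψ.differentiable two_ne_zero)
    hψ.differentiable_deriv_two hψeq hK
end
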